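/- Any short exact sequence 0 → M/2M → N/2N → L/2L → 0 of ℤ/2ℤ-vector spaces, where M, N, L are finitely generated free ℤ-modules and the maps are induced modulo 2 by some ℤ-linear data, can be lifted to a short exact sequence 0 → M → N → L → 0 of ℤ-modules. More precisely: given finitely generated free ℤ-modules M, N, L and a short exact sequence 0 → M/2M → N/2N → L/2L → 0 of ℤ/2ℤ-vector spaces, there exist ℤ-linear maps α : M → N and β : N → L whose reductions modulo 2 are the given maps and such that 0 → M → N → L → 0 is exact. -/

import Mathlib

/-- The submodule `2M` of a `ℤ`-module `M`. -/
def twoSMul (M : Type*) [AddCommGroup M] [Module ℤ M] : Submodule ℤ M :=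
  Submodule.map ((2 : ℤ) • (LinearMap.id : M →ₗ[ℤ] M)) ⊤

/-!
Lift `M/pM → N/pN` to `A : M → N`, and a section of `N/pN → L/pL` to `s : L → N`. By the five lemma
`A + s : M × L → N` is an isomorphism modulo `p`. In Smith normal form it is a square diagonal
matrix whose entries are coprime to `p`; replacing each entry by a unit congruent to it modulo `p`
(for `p = 2`, by `1`) gives an isomorphism `e : M × L ≃ N` with the same reduction, and `e` carries
the split sequence `0 → M → M × L → L → 0` to the required one.
-/

section Reduction

open scoped Pointwise

variable {R : Type*} [CommRing R] {p : R}
  {P N : Type*} [AddCommGroup P] [Module R P] [AddCommGroup N] [Module R N]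

theorem smul_top_le_comap_smul_top (p : R) (f : P →ₗ[R] N) :
    p • ⊤ ≤ (p • ⊤ : Submodule R N).comap f := by
  rw [← Submodule.map_le_iff_le_comap, Submodule.map_pointwise_smul]
  exact smul_mono_right p le_top

theorem quotSMulTop_mk_eq_mk_iff {x y : N} :
    (Submodule.Quotient.mk x : QuotSMulTop p N) = Submodule.Quotient.mk y ↔
      ∃ z, p • z = x - y := by
  simp [Submodule.Quotient.eq, Submodule.mem_smul_pointwise_iff_exists]

theorem exists_comp_quotSMulTop_map_eq [Module.Projective R P] {X : Type*} [AddCommGroup X]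
    [Module R X] {φ : QuotSMulTop p N →ₗ[R] X} (hφ : Function.Surjective φ)
    (ψ : QuotSMulTop p P →ₗ[R] X) :
    ∃ F : P →ₗ[R] N, φ ∘ₗ QuotSMulTop.map p F = ψ := by
  obtain ⟨F, hF⟩ := Module.projective_lifting_property (φ ∘ₗ Submodule.mkQ (p • ⊤))
    (ψ ∘ₗ Submodule.mkQ (p • ⊤)) (hφ.comp (Submodule.mkQ_surjective _))
  refine ⟨F, Submodule.linearMap_qext _ ?_⟩
  rw [LinearMap.comp_assoc, QuotSMulTop.map_comp_mkQ, ← LinearMap.comp_assoc, hF]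

theorem eq_zero_of_forall_exists_pow_smul_eq [IsDomain R] [WfDvdMonoid R] [Module.Free R P]
    (hp : ¬IsUnit p) {x : P} (hx : ∀ n : ℕ, ∃ y, p ^ n • y = x) : x = 0 := by
  let b := Module.Free.chooseBasis R P
  refine b.ext_elem fun i => ?_
  by_contra hxi
  obtain ⟨n, hn⟩ := FiniteMultiplicity.of_not_isUnit hp (by simpa using hxi)
  obtain ⟨y, rfl⟩ := hx (n + 1)
  exact hn ⟨b.repr y i, by simp⟩

theorem injective_of_injective_quotSMulTop_map [IsDomain R] [WfDvdMonoid R] [Module.Free R P]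
    [Module.IsTorsionFree R N] (hp : ¬IsUnit p) {F : P →ₗ[R] N}
    (hF : Function.Injective (QuotSMulTop.map p F)) : Function.Injective F := by
  have ker_divisible : ∀ x, F x = 0 → ∃ y, p • y = x ∧ F y = 0 := by
    intro x hx
    have hx_mod : (Submodule.Quotient.mk x : QuotSMulTop p P) = Submodule.Quotient.mk 0 :=
      hF (by simp [hx])
    obtain ⟨y, hy⟩ := quotSMulTop_mk_eq_mk_iff.1 hx_mod
    rw [sub_zero] at hy
    rw [← hy, map_smul, smul_eq_zero] at hx
    obtain rfl | hFy := hx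
    · exact ⟨0, by simp [← hy]⟩
    · exact ⟨y, hy, hFy⟩
  refine (injective_iff_map_eq_zero F).2 fun x hx =>
    eq_zero_of_forall_exists_pow_smul_eq hp fun n => ?_
  suffices h : ∃ y, p ^ n • y = x ∧ F y = 0 from h.imp fun _ => And.left
  induction n with
  | zero => exact ⟨x, by simp, hx⟩
  | succ n ih =>
    obtain ⟨y, rfl, hy⟩ := ih
    obtain ⟨z, rfl, hz⟩ := ker_divisible y hy
    exact ⟨z, by rw [pow_succ, mul_smul], hz⟩

theorem exists_isCoprime_of_surjective_quotSMulTop_map {F : P →ₗ[R] N}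
    (hF : Function.Surjective (QuotSMulTop.map p F)) {φ : N →ₗ[R] R}
    (hφ : Function.Surjective φ) : ∃ x, IsCoprime (φ (F x)) p := by
  obtain ⟨y, hy⟩ := hφ 1
  obtain ⟨x', hx'⟩ := hF (Submodule.Quotient.mk y)
  obtain ⟨x, rfl⟩ := Submodule.Quotient.mk_surjective _ x'
  rw [QuotSMulTop.map_apply_mk, quotSMulTop_mk_eq_mk_iff] at hx'
  obtain ⟨z, hz⟩ := hx'
  have hφz : p * φ z = φ (F x) - 1 := by simpa [hy] using congrArg φ hz
  exact ⟨x, 1, -φ z, by linear_combination -hφz⟩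

theorem injective_quotSMulTop_map_inl (p : R) (P N : Type*) [AddCommGroup P] [Module R P]
    [AddCommGroup N] [Module R N] :
    Function.Injective (QuotSMulTop.map p (LinearMap.inl R P N)) := by
  refine Function.LeftInverse.injective (g := QuotSMulTop.map p (LinearMap.fst R P N)) fun x => ?_
  rw [← LinearMap.comp_apply, ← QuotSMulTop.map_comp, LinearMap.fst_comp_inl, QuotSMulTop.map_id,
    LinearMap.id_apply]

theorem quotSMulTop_prod_hom_ext {X : Type*} [AddCommGroup X] [Module R X]
    {f g : QuotSMulTop p (P × N) →ₗ[R] X}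
    (hinl : f ∘ₗ QuotSMulTop.map p (.inl R P N) = g ∘ₗ QuotSMulTop.map p (.inl R P N))
    (hinr : f ∘ₗ QuotSMulTop.map p (.inr R P N) = g ∘ₗ QuotSMulTop.map p (.inr R P N)) :
    f = g :=
  Submodule.linearMap_qext _ <| LinearMap.prod_ext
    (LinearMap.ext fun x => LinearMap.congr_fun hinl (Submodule.Quotient.mk x))
    (LinearMap.ext fun y => LinearMap.congr_fun hinr (Submodule.Quotient.mk y))

end Reduction

section FiveLemma

variable {R : Type*} [CommRing R] {A B B' C : Type*}
  [AddCommGroup A] [Module R A] [AddCommGroup B] [Module R B]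
  [AddCommGroup B'] [Module R B'] [AddCommGroup C] [Module R C]

theorem bijective_of_comp_eq_of_exact {f : A →ₗ[R] B} {g : B →ₗ[R] C} {f' : A →ₗ[R] B'}
    {g' : B' →ₗ[R] C} {i : B →ₗ[R] B'}
    (hf : Function.Injective f) (hfg : Function.Exact f g) (hg : Function.Surjective g)
    (hf' : Function.Injective f') (hfg' : Function.Exact f' g') (hg' : Function.Surjective g')
    (hif : i ∘ₗ f = f') (hgi : g' ∘ₗ i = g) : Function.Bijective i :=
  LinearMap.bijective_of_surjective_of_bijective_of_bijective_of_injective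
    (0 : PUnit →ₗ[R] A) f g (0 : C →ₗ[R] PUnit) (0 : PUnit →ₗ[R] A) f' g' (0 : C →ₗ[R] PUnit)
    .id .id i .id .id rfl hif.symm hgi rfl
    ((LinearMap.exact_zero_iff_injective PUnit f).2 hf) hfg
    ((LinearMap.exact_zero_iff_surjective PUnit g).2 hg)
    ((LinearMap.exact_zero_iff_injective PUnit f').2 hf') hfg'
    ((LinearMap.exact_zero_iff_surjective PUnit g').2 hg')
    Function.surjective_id Function.bijective_id Function.bijective_id Function.injective_id

end FiveLemma

section PrincipalIdealDomain

variable {R : Type*} [CommRing R] [IsDomain R] [IsPrincipalIdealRing R] {p : R}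
  {P N : Type*} [AddCommGroup P] [Module R P]
  [AddCommGroup N] [Module R N] [Module.Free R N] [Module.Finite R N]

theorem exists_bases_apply_eq_smul_of_injective {F : P →ₗ[R] N} (hF : Function.Injective F) :
    ∃ (m n : ℕ) (b : Module.Basis (Fin m) R P) (c : Module.Basis (Fin n) R N) (f : Fin m ↪ Fin n)
      (a : Fin m → R), ∀ i, F (b i) = a i • c (f i) := by
  obtain ⟨m, c, b, f, a, hbc⟩ :=
    Submodule.smithNormalForm (Module.finBasis R N) (LinearMap.range F)
  refine ⟨m, _, b.map (LinearEquiv.ofInjective F hF).symm, c, f, a, fun i => ?_⟩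
  rw [← hbc, Module.Basis.map_apply, ← LinearEquiv.ofInjective_apply (h := hF),
    LinearEquiv.apply_symm_apply]

theorem exists_bases_apply_eq_smul_isCoprime [Module.Free R P] (hp : ¬IsUnit p) {F : P →ₗ[R] N}
    (hF : Function.Bijective (QuotSMulTop.map p F)) :
    ∃ (n : ℕ) (b : Module.Basis (Fin n) R P) (c : Module.Basis (Fin n) R N) (a : Fin n → R),
      ∀ i, F (b i) = a i • c i ∧ IsCoprime (a i) p := by
  obtain ⟨m, n, b, c, f, a, hbc⟩ :=
    exists_bases_apply_eq_smul_of_injective (injective_of_injective_quotSMulTop_map hp hF.1)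
  have coord_coprime (j : Fin n) : ∃ x, IsCoprime (c.coord j (F x)) p :=
    exists_isCoprime_of_surjective_quotSMulTop_map hF.2 fun r => ⟨r • c j, by simp⟩
  have coord_comp_F (i : Fin m) : c.coord (f i) ∘ₗ F = a i • b.coord i :=
    b.ext fun k => by obtain rfl | hk := eq_or_ne k i <;> simp [*]
  have a_coprime (i : Fin m) : IsCoprime (a i) p := by
    obtain ⟨x, hx⟩ := coord_coprime (f i)
    rw [← LinearMap.comp_apply, coord_comp_F, LinearMap.smul_apply, smul_eq_mul] at hx
    exact hx.of_mul_left_left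
  have f_surjective : Function.Surjective f := by
    intro j
    by_contra! hj
    have coord_comp_F_eq_zero : c.coord j ∘ₗ F = 0 := b.ext fun i => by simp [hbc, hj i]
    obtain ⟨x, hx⟩ := coord_coprime j
    rw [← LinearMap.comp_apply, coord_comp_F_eq_zero, LinearMap.zero_apply,
      isCoprime_zero_left] at hx
    exact hp hx
  let σ : Fin m ≃ Fin n := Equiv.ofBijective f ⟨f.injective, f_surjective⟩
  exact ⟨m, b, c.reindex σ.symm, a, fun i =>
    ⟨by rw [hbc, Module.Basis.reindex_apply]; rfl, a_coprime i⟩⟩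

theorem exists_linearEquiv_quotSMulTop_map_eq [Module.Free R P] (hp : ¬IsUnit p)
    (units_lift : ∀ a, IsCoprime a p → ∃ u : Rˣ, p ∣ u - a) {F : P →ₗ[R] N}
    (hF : Function.Bijective (QuotSMulTop.map p F)) :
    ∃ e : P ≃ₗ[R] N, QuotSMulTop.map p (e : P →ₗ[R] N) = QuotSMulTop.map p F := by
  obtain ⟨n, b, c, a, hbc⟩ := exists_bases_apply_eq_smul_isCoprime hp hF
  choose u k hk using fun i => units_lift (a i) (hbc i).2
  refine ⟨b.equiv (c.unitsSMul u) (Equiv.refl _), Submodule.linearMap_qext _ (b.ext fun i => ?_)⟩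
  simp only [LinearMap.comp_apply, Submodule.mkQ_apply, QuotSMulTop.map_apply_mk,
    quotSMulTop_mk_eq_mk_iff]
  exact ⟨k i • c i, by
    simp [hbc, smul_smul, ← hk, sub_smul, Module.Basis.unitsSMul_apply, Units.smul_def]⟩

variable {M L : Type*} [AddCommGroup M] [Module R M] [Module.Free R M]
  [AddCommGroup L] [Module R L] [Module.Free R L]
  {abar : QuotSMulTop p M →ₗ[R] QuotSMulTop p N} {bbar : QuotSMulTop p N →ₗ[R] QuotSMulTop p L}

theorem exists_exact_quotSMulTop_map_eq (hp : ¬IsUnit p)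
    (units_lift : ∀ a, IsCoprime a p → ∃ u : Rˣ, p ∣ u - a)
    (hinj : Function.Injective abar) (hsurj : Function.Surjective bbar)
    (hex : Function.Exact abar bbar) :
    ∃ (α : M →ₗ[R] N) (β : N →ₗ[R] L), QuotSMulTop.map p α = abar ∧ QuotSMulTop.map p β = bbar ∧
      Function.Injective α ∧ Function.Surjective β ∧ Function.Exact α β := by
  obtain ⟨A, hA⟩ := exists_comp_quotSMulTop_map_eq Function.surjective_id (φ := .id) abar
  obtain ⟨s, hs⟩ := exists_comp_quotSMulTop_map_eq hsurj LinearMap.id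
  rw [LinearMap.id_comp] at hA
  let F : M × L →ₗ[R] N := A.coprod s
  have F_inl : QuotSMulTop.map p F ∘ₗ QuotSMulTop.map p (.inl R M L) = abar := by
    rw [← QuotSMulTop.map_comp, LinearMap.coprod_inl, hA]
  have F_inr : QuotSMulTop.map p F ∘ₗ QuotSMulTop.map p (.inr R M L) = QuotSMulTop.map p s := by
    rw [← QuotSMulTop.map_comp, LinearMap.coprod_inr]
  have bbar_F : bbar ∘ₗ QuotSMulTop.map p F = QuotSMulTop.map p (.snd R M L) := by
    refine quotSMulTop_prod_hom_ext ?_ ?_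
    · rw [LinearMap.comp_assoc, F_inl, hex.linearMap_comp_eq_zero, ← QuotSMulTop.map_comp,
        LinearMap.snd_comp_inl, map_zero]
    · rw [LinearMap.comp_assoc, F_inr, hs, ← QuotSMulTop.map_comp, LinearMap.snd_comp_inr,
        QuotSMulTop.map_id]
  have F_bijective : Function.Bijective (QuotSMulTop.map p F) :=
    bijective_of_comp_eq_of_exact (injective_quotSMulTop_map_inl p M L)
      (QuotSMulTop.map_exact p .inl_snd LinearMap.snd_surjective)
      (QuotSMulTop.map_surjective p LinearMap.snd_surjective) hinj hex hsurj F_inl bbar_F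
  obtain ⟨e, he⟩ := exists_linearEquiv_quotSMulTop_map_eq hp units_lift F_bijective
  refine ⟨e ∘ₗ .inl R M L, .snd R M L ∘ₗ e.symm, ?_, ?_,
    e.injective.comp LinearMap.inl_injective, Prod.snd_surjective.comp e.symm.surjective,
    (LinearEquiv.conj_exact_iff_exact _ _ e).2 Function.Exact.inl_snd⟩
  · rw [QuotSMulTop.map_comp, he, F_inl]
  · rw [QuotSMulTop.map_comp, ← bbar_F, ← he, LinearMap.comp_assoc, ← QuotSMulTop.map_comp,
      LinearEquiv.comp_symm, QuotSMulTop.map_id, LinearMap.comp_id]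

open scoped Pointwise in
theorem lift_exact_sequence_mod_two_general (hp : ¬IsUnit p)
    (units_lift : ∀ a, IsCoprime a p → ∃ u : Rˣ, p ∣ u - a)
    (hinj : Function.Injective abar) (hsurj : Function.Surjective bbar)
    (hex : LinearMap.range abar = LinearMap.ker bbar) :
    ∃ (α : M →ₗ[R] N) (β : N →ₗ[R] L)
      (hα : p • ⊤ ≤ (p • ⊤ : Submodule R N).comap α)
      (hβ : p • ⊤ ≤ (p • ⊤ : Submodule R L).comap β),
      Submodule.mapQ _ _ α hα = abar ∧
      Submodule.mapQ _ _ β hβ = bbar ∧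
      Function.Injective α ∧ Function.Surjective β ∧
      LinearMap.range α = LinearMap.ker β := by
  obtain ⟨α, β, map_α, map_β, α_injective, β_surjective, αβ_exact⟩ :=
    exists_exact_quotSMulTop_map_eq hp units_lift hinj hsurj (LinearMap.exact_iff.2 hex.symm)
  exact ⟨α, β, smul_top_le_comap_smul_top p α, smul_top_le_comap_smul_top p β, map_α, map_β,
    α_injective, β_surjective, (LinearMap.exact_iff.1 αβ_exact).symm⟩

end PrincipalIdealDomain

/-- Any short exact sequence `0 → M/2M → N/2N → L/2L → 0` of `ℤ/2ℤ`-vector spaces, with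
`M, N, L` finitely generated free `ℤ`-modules, can be lifted to a short exact sequence
`0 → M → N → L → 0` of `ℤ`-modules, the liftings inducing the given maps modulo 2. -/
theorem lift_exact_sequence_mod_two
    (M N L : Type*) [AddCommGroup M] [Module ℤ M] [Module.Free ℤ M] [Module.Finite ℤ M]
    [AddCommGroup N] [Module ℤ N] [Module.Free ℤ N] [Module.Finite ℤ N]
    [AddCommGroup L] [Module ℤ L] [Module.Free ℤ L] [Module.Finite ℤ L]
    (abar : (M ⧸ twoSMul M) →ₗ[ℤ] (N ⧸ twoSMul N))
    (bbar : (N ⧸ twoSMul N) →ₗ[ℤ] (L ⧸ twoSMul L))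
    (hinj : Function.Injective abar) (hsurj : Function.Surjective bbar)
    (hex : LinearMap.range abar = LinearMap.ker bbar) :
    ∃ (α : M →ₗ[ℤ] N) (β : N →ₗ[ℤ] L)
      (hα : twoSMul M ≤ Submodule.comap α (twoSMul N))
      (hβ : twoSMul N ≤ Submodule.comap β (twoSMul L)),
      Submodule.mapQ _ _ α hα = abar ∧
      Submodule.mapQ _ _ β hβ = bbar ∧
      Function.Injective α ∧ Function.Surjective β ∧
      LinearMap.range α = LinearMap.ker β := by
  -- For the canonical `ℤ`-module structure, `twoSMul M` and `2 • ⊤` are definitionally equal.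
  obtain rfl : ‹Module ℤ M› = AddCommGroup.toIntModule M := Subsingleton.elim _ _
  obtain rfl : ‹Module ℤ N› = AddCommGroup.toIntModule N := Subsingleton.elim _ _
  obtain rfl : ‹Module ℤ L› = AddCommGroup.toIntModule L := Subsingleton.elim _ _
  exact lift_exact_sequence_mod_two_general (M := M) (N := N) (L := L) Int.prime_two.not_isUnit
    (fun a ha => ⟨1, (odd_one.sub_odd (Int.isCoprime_two_right.1 ha)).two_dvd⟩) hinj hsurj hex
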